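/- Pointwise comparison of connection differences (Lemma 3.5): let g, g̃ be C¹ Hermitian positive-definite n×n matrix fields and β, β̃ be C¹ antisymmetric n×n matrix fields on U, with generalized metrics G := G(g,β) and G̃ := G(g̃,β̃). Fix Λ ≥ 1 and suppose at a point z ∈ U that Λ⁻¹·g̃ ≤ g ≤ Λ·g̃ (in the Loewner order) and |β|²_g := Σ β_{ik}·conj(β_{jl})·g^{j̄i}·g^{l̄k} ≤ Λ. Then there exists a constant K, depending only on n, Λ, and upper bounds at z for the entries of g̃, g̃⁻¹, β̃ and their first Wirtinger derivatives, such that |Υ^g|²_g ≤ Λ²·|Υ|²_{g⁻¹,G⁻¹,G} + K at z, where Υ^gᵢ{}_a{}^p := Σ_q(∂ᵢg_{aq̄}·g^{q̄p} − ∂ᵢg̃_{aq̄}·g̃^{q̄p}), |Υ^g|²_g := Σ g^{j̄i}·g^{b̄a}·g_{pq̄}·Υ^gᵢ{}_a{}^p·conj(Υ^gⱼ{}_b{}^q), and Υ is the difference of the Chern connections of G and G̃. -/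

import Mathlib

open Matrix
open scoped ComplexOrder

noncomputable section

/-- The generalized metric associated to a Hermitian metric `g` and a `(2,0)`-form
(antisymmetric matrix) `β`, as a `2n × 2n` block matrix on `T ⊕ T*`. -/
def genMetric {n : ℕ} (g β : Matrix (Fin n) (Fin n) ℂ) :
    Matrix (Fin n ⊕ Fin n) (Fin n ⊕ Fin n) ℂ :=
  Matrix.fromBlocks (g + β * (g⁻¹).map (starRingEnd ℂ) * βᴴ) (β * (g⁻¹).map (starRingEnd ℂ))
    ((g⁻¹).map (starRingEnd ℂ) * βᴴ) ((g⁻¹).map (starRingEnd ℂ))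

/-- The Wirtinger derivative `∂ᵢ f = ½(∂f/∂xᵢ − i·∂f/∂yᵢ)` of a function `f : ℂⁿ → ℂ`,
computed via the real Fréchet derivative. -/
def wd {n : ℕ} (i : Fin n) (f : (Fin n → ℂ) → ℂ) (z : Fin n → ℂ) : ℂ :=
  (fderiv ℝ f z (Pi.single i 1) - Complex.I * fderiv ℝ f z (Pi.single i Complex.I)) / 2

/-- The conjugate Wirtinger derivative `∂_{ī} f = ½(∂f/∂xᵢ + i·∂f/∂yᵢ)`. -/
def wdb {n : ℕ} (i : Fin n) (f : (Fin n → ℂ) → ℂ) (z : Fin n → ℂ) : ℂ :=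
  (fderiv ℝ f z (Pi.single i 1) + Complex.I * fderiv ℝ f z (Pi.single i Complex.I)) / 2

/-- Lowered Chern curvature `Ω^h_{ij̄αβ̄} = −∂ᵢ∂_{j̄}h_{αβ̄} + Σ ∂ᵢh_{αγ̄}·h^{γ̄δ}·∂_{j̄}h_{δβ̄}`
of a Hermitian matrix field `h`, where `h^{γ̄δ} = (h⁻¹) γ δ`. -/
def chern {n : ℕ} {ι : Type*} [Fintype ι] [DecidableEq ι]
    (h : (Fin n → ℂ) → Matrix ι ι ℂ) (i j : Fin n) (a b : ι) (z : Fin n → ℂ) : ℂ :=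
  - wd i (fun w => wdb j (fun v => h v a b) w) z
    + ∑ c : ι, ∑ d : ι, wd i (fun w => h w a c) z * (h z)⁻¹ c d * wdb j (fun w => h w d b) z

/-- Chern torsion `T_{ijk̄} = ∂ᵢ g_{jk̄} − ∂ⱼ g_{ik̄}`. -/
def torsion {n : ℕ} (g : (Fin n → ℂ) → Matrix (Fin n) (Fin n) ℂ)
    (i j k : Fin n) (z : Fin n → ℂ) : ℂ :=
  wd i (fun w => g w j k) z - wd j (fun w => g w i k) z

/-- `β` is a torsion potential for `g` on `U`: `∂_{k̄} β_{ij} = T_{ijk̄}` on `U`. -/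
def IsTorsionPotential {n : ℕ} (g β : (Fin n → ℂ) → Matrix (Fin n) (Fin n) ℂ)
    (U : Set (Fin n → ℂ)) : Prop :=
  ∀ z ∈ U, ∀ i j k : Fin n, wdb k (fun w => β w i j) z = torsion g i j k z

/-- Second Chern covariant derivative
`∇ᵢ∇_{j̄}β_{ab} = ∂ᵢ∂_{j̄}β_{ab} − Σ g^{k̄l}·∂ᵢg_{ak̄}·∂_{j̄}β_{lb} − Σ g^{k̄l}·∂ᵢg_{bk̄}·∂_{j̄}β_{al}`. -/
def nabla2beta {n : ℕ} (g β : (Fin n → ℂ) → Matrix (Fin n) (Fin n) ℂ)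
    (i j a b : Fin n) (z : Fin n → ℂ) : ℂ :=
  wd i (fun w => wdb j (fun v => β v a b) w) z
    - ∑ k : Fin n, ∑ l : Fin n, (g z)⁻¹ k l * wd i (fun w => g w a k) z * wdb j (fun w => β w l b) z
    - ∑ k : Fin n, ∑ l : Fin n, (g z)⁻¹ k l * wd i (fun w => g w b k) z * wdb j (fun w => β w a l) z

/-- Difference of Chern connections `Υᵢ{}_A{}^D = Σ_C (∂ᵢG_{AC̄}·G^{C̄D} − ∂ᵢG̃_{AC̄}·G̃^{C̄D})`. -/
def UpsS {n : ℕ} {ι : Type*} [Fintype ι] [DecidableEq ι]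
    (G Gt : (Fin n → ℂ) → Matrix ι ι ℂ) (i : Fin n) (A D : ι) (z : Fin n → ℂ) : ℂ :=
  ∑ C : ι, (wd i (fun w => G w A C) z * (G z)⁻¹ C D
    - wd i (fun w => Gt w A C) z * (Gt z)⁻¹ C D)

/-- `|Υ|²_{g⁻¹,G⁻¹,H} = Σ g^{j̄i}·G^{B̄A}·H_{DĒ}·Υᵢ{}_A{}^D·conj(Υⱼ{}_B{}^E)`. -/
def upsNormS {n : ℕ} {ι : Type*} [Fintype ι] [DecidableEq ι]
    (g : (Fin n → ℂ) → Matrix (Fin n) (Fin n) ℂ)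
    (G Gt H : (Fin n → ℂ) → Matrix ι ι ℂ) (z : Fin n → ℂ) : ℂ :=
  ∑ i : Fin n, ∑ j : Fin n, ∑ A : ι, ∑ B : ι, ∑ D : ι, ∑ E : ι,
    (g z)⁻¹ j i * (G z)⁻¹ B A * H z D E * UpsS G Gt i A D z *
      (starRingEnd ℂ) (UpsS G Gt j B E z)

/-- `f` and its first Wirtinger derivatives are bounded by `B` at `z`. -/
def BoundedDerivs1 {n : ℕ} (B : ℝ) (f : (Fin n → ℂ) → ℂ) (z : Fin n → ℂ) : Prop :=
  ‖f z‖ ≤ B ∧ ∀ i : Fin n, ‖wd i f z‖ ≤ B ∧ ‖wdb i f z‖ ≤ B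

/-!
Write `g = W * Wᴴ` at the point. Since `genMetric g β` is the `B`-field transform by `e^β` of
`g ⊕ (gᵀ)⁻¹`, the matrix `e^β * (W ⊕ (Wᵀ)⁻¹)` is a unitary frame for it, and in unitary frames
all the norms involved are Frobenius norms. In this frame the connection of `genMetric g β`
has diagonal blocks conjugate to `θ` and `-θᵀ`, where `θ` is the connection of `g`; that of
`genMetric g̃ β̃` has in addition the terms produced by the residual shear `β̃ - β`. Hence, if
`M` is the difference of the connections of `g` and `g̃` in the frame `W`, the difference of
the generalized connections has diagonal blocks `M - Γ * C` and `-(M - (C * Γ)ᵀ)ᵀ`, where `Γ`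
is `β̃ - β` in the frame and `C` depends only on `g̃`, `β̃` and the frame. Both are bounded,
so applying `‖M‖² ≤ 2 * ‖M - R‖² + 2 * ‖R‖²` to each of the two blocks and averaging bounds
`‖M‖²` by the generalized norm, with coefficient `1`, plus a constant.
-/

open scoped Matrix.Norms.Frobenius

section Wirtinger

variable {n : ℕ} {ι κ μ : Type*} (i : Fin n) {z : Fin n → ℂ}

theorem wd_mul {f h : (Fin n → ℂ) → ℂ} (hf : DifferentiableAt ℝ f z)
    (hh : DifferentiableAt ℝ h z) :
    wd i (fun w => f w * h w) z = wd i f z * h z + f z * wd i h z := by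
  simp only [wd, fderiv_fun_mul hf hh, _root_.add_apply, _root_.smul_apply, smul_eq_mul]
  ring

theorem wd_sum {s : Finset ι} {f : ι → (Fin n → ℂ) → ℂ}
    (hf : ∀ c ∈ s, DifferentiableAt ℝ (f c) z) :
    wd i (fun w => ∑ c ∈ s, f c w) z = ∑ c ∈ s, wd i (f c) z := by
  simp only [wd, fderiv_fun_sum hf, _root_.sum_apply, Finset.mul_sum,
    ← Finset.sum_sub_distrib, Finset.sum_div]

theorem wd_star (f : (Fin n → ℂ) → ℂ) (z : Fin n → ℂ) :
    wd i (fun w => star (f w)) z = star (wdb i f z) := by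
  simp only [wd, wdb, fderiv_star]
  simp [sub_eq_add_neg]

/-- The Wirtinger derivative `∂ᵢF` of a matrix field, taken entry by entry. -/
def wdMatrix (F : (Fin n → ℂ) → Matrix ι κ ℂ) (z : Fin n → ℂ) : Matrix ι κ ℂ :=
  of fun a b => wd i (fun w => F w a b) z

theorem wdMatrix_congr {F H : (Fin n → ℂ) → Matrix ι κ ℂ} (h : F =ᶠ[nhds z] H) :
    wdMatrix i F z = wdMatrix i H z := by
  ext a b
  have hab : (fun w => F w a b) =ᶠ[nhds z] fun w => H w a b := h.fun_comp (· a b)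
  simp only [wdMatrix, of_apply, wd, hab.fderiv_eq]

theorem wdMatrix_const (A : Matrix ι κ ℂ) : wdMatrix i (fun _ => A) z = 0 := by
  ext a b
  simp [wdMatrix, wd]

theorem wdMatrix_transpose (F : (Fin n → ℂ) → Matrix ι κ ℂ) :
    wdMatrix i (fun w => (F w)ᵀ) z = (wdMatrix i F z)ᵀ :=
  rfl

theorem wdMatrix_fromBlocks {ν : Type*} (A : (Fin n → ℂ) → Matrix ι κ ℂ)
    (B : (Fin n → ℂ) → Matrix ι μ ℂ) (C : (Fin n → ℂ) → Matrix ν κ ℂ)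
    (D : (Fin n → ℂ) → Matrix ν μ ℂ) :
    wdMatrix i (fun w => fromBlocks (A w) (B w) (C w) (D w)) z =
      fromBlocks (wdMatrix i A z) (wdMatrix i B z) (wdMatrix i C z) (wdMatrix i D z) := by
  ext (a | a) (b | b) <;> rfl

theorem differentiableAt_matrix_iff [Finite ι] [Finite κ] {F : (Fin n → ℂ) → Matrix ι κ ℂ} :
    DifferentiableAt ℝ F z ↔ ∀ a b, DifferentiableAt ℝ (fun w => F w a b) z := by
  have := Fintype.ofFinite ι
  have := Fintype.ofFinite κ
  exact (differentiableAt_pi (Φ := fun w a => F w a)).trans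
    (forall_congr' fun a => differentiableAt_pi (Φ := fun w => F w a))

theorem differentiableAt_transpose [Finite ι] [Finite κ] {F : (Fin n → ℂ) → Matrix ι κ ℂ}
    (hF : DifferentiableAt ℝ F z) : DifferentiableAt ℝ (fun w => (F w)ᵀ) z :=
  differentiableAt_matrix_iff.2 fun a b => differentiableAt_matrix_iff.1 hF b a

theorem differentiableAt_conjTranspose [Finite ι] [Finite κ] {F : (Fin n → ℂ) → Matrix ι κ ℂ}
    (hF : DifferentiableAt ℝ F z) : DifferentiableAt ℝ (fun w => (F w)ᴴ) z :=
  differentiableAt_matrix_iff.2 fun a b => (differentiableAt_matrix_iff.1 hF b a).star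

theorem differentiableAt_fromBlocks {ν : Type*} [Finite ι] [Finite κ] [Finite μ] [Finite ν]
    {A : (Fin n → ℂ) → Matrix ι κ ℂ} {B : (Fin n → ℂ) → Matrix ι μ ℂ}
    {C : (Fin n → ℂ) → Matrix ν κ ℂ} {D : (Fin n → ℂ) → Matrix ν μ ℂ}
    (hA : DifferentiableAt ℝ A z) (hB : DifferentiableAt ℝ B z)
    (hC : DifferentiableAt ℝ C z) (hD : DifferentiableAt ℝ D z) :
    DifferentiableAt ℝ (fun w => fromBlocks (A w) (B w) (C w) (D w)) z := by
  rw [differentiableAt_matrix_iff] at *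
  rintro (a | a) (b | b)
  exacts [hA a b, hB a b, hC a b, hD a b]

variable [Fintype κ]

theorem wdMatrix_mul [Finite ι] [Finite μ] {F : (Fin n → ℂ) → Matrix ι κ ℂ}
    {H : (Fin n → ℂ) → Matrix κ μ ℂ} (hF : DifferentiableAt ℝ F z) (hH : DifferentiableAt ℝ H z) :
    wdMatrix i (fun w => F w * H w) z = wdMatrix i F z * H z + F z * wdMatrix i H z := by
  rw [differentiableAt_matrix_iff] at hF hH
  ext a b
  simp only [wdMatrix, of_apply, mul_apply, Matrix.add_apply]
  rw [wd_sum i fun c _ => (hF a c).fun_mul (hH c b), ← Finset.sum_add_distrib]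
  exact Finset.sum_congr rfl fun c _ => wd_mul i (hF a c) (hH c b)

variable [DecidableEq κ]

theorem differentiableAt_inv_matrix {F : (Fin n → ℂ) → Matrix κ κ ℂ}
    (hF : DifferentiableAt ℝ F z) (hz : IsUnit (F z)) :
    DifferentiableAt ℝ (fun w => (F w)⁻¹) z := by
  simp_rw [nonsing_inv_eq_ringInverse]
  exact hF.inverse hz

theorem wdMatrix_inv {F : (Fin n → ℂ) → Matrix κ κ ℂ}
    (hF : DifferentiableAt ℝ F z) (hz : IsUnit (F z)) :
    wdMatrix i (fun w => (F w)⁻¹) z = -((F z)⁻¹ * wdMatrix i F z * (F z)⁻¹) := by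
  have hunit : ∀ᶠ w in nhds z, IsUnit (F w) :=
    hF.continuousAt.eventually (Units.isOpen.mem_nhds hz)
  have hone : (fun w => F w * (F w)⁻¹) =ᶠ[nhds z] fun _ => 1 :=
    hunit.mono fun w hw => mul_nonsing_inv _ ((isUnit_iff_isUnit_det _).1 hw)
  have hsum : wdMatrix i F z * (F z)⁻¹ + F z * wdMatrix i (fun w => (F w)⁻¹) z = 0 := by
    rw [← wdMatrix_mul i hF (differentiableAt_inv_matrix hF hz), wdMatrix_congr i hone,
      wdMatrix_const]
  have hinv : (F z)⁻¹ * F z = 1 := nonsing_inv_mul _ ((isUnit_iff_isUnit_det _).1 hz)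
  rw [← Matrix.one_mul (wdMatrix i _ z), ← hinv, Matrix.mul_assoc, eq_neg_of_add_eq_zero_right hsum,
    Matrix.mul_neg, Matrix.mul_assoc]

end Wirtinger

section Connection

variable {n : ℕ} {ι : Type*} [Fintype ι] [DecidableEq ι] (i : Fin n) {z : Fin n → ℂ}

/-- The Chern connection form `∂ᵢG·G⁻¹` of a Hermitian metric `G`, in the convention of `UpsS`. -/
def connectionForm (G : (Fin n → ℂ) → Matrix ι ι ℂ) (z : Fin n → ℂ) : Matrix ι ι ℂ :=
  wdMatrix i G z * (G z)⁻¹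

theorem connectionForm_congr {G H : (Fin n → ℂ) → Matrix ι ι ℂ} (h : G =ᶠ[nhds z] H) :
    connectionForm i G z = connectionForm i H z := by
  rw [connectionForm, connectionForm, wdMatrix_congr i h, h.self_of_nhds]

theorem upsS_eq_connectionForm_sub (G Gt : (Fin n → ℂ) → Matrix ι ι ℂ) (A D : ι) :
    UpsS G Gt i A D z = (connectionForm i G z - connectionForm i Gt z) A D := by
  simp only [UpsS, connectionForm, Matrix.sub_apply, mul_apply, Finset.sum_sub_distrib, wdMatrix,
    of_apply]

theorem connectionForm_transpose_inv {G : (Fin n → ℂ) → Matrix ι ι ℂ}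
    (hG : DifferentiableAt ℝ G z) (hz : IsUnit (G z)) :
    connectionForm i (fun w => ((G w)⁻¹)ᵀ) z = -(connectionForm i G z)ᵀ := by
  have hinv : G z * (G z)⁻¹ = 1 := mul_nonsing_inv _ ((isUnit_iff_isUnit_det _).1 hz)
  rw [connectionForm, wdMatrix_transpose, wdMatrix_inv i hG hz, ← transpose_nonsing_inv,
    nonsing_inv_nonsing_inv _ ((isUnit_iff_isUnit_det _).1 hz), ← transpose_mul,
    Matrix.mul_neg, ← Matrix.mul_assoc, ← Matrix.mul_assoc, hinv, Matrix.one_mul, transpose_neg]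
  rfl

theorem connectionForm_mul_mul {P H Q : (Fin n → ℂ) → Matrix ι ι ℂ}
    (hP : DifferentiableAt ℝ P z) (hH : DifferentiableAt ℝ H z) (hQ : DifferentiableAt ℝ Q z)
    (hPz : IsUnit (P z)) (hHz : IsUnit (H z)) (hQz : IsUnit (Q z)) :
    connectionForm i (fun w => P w * H w * Q w) z =
      P z * ((P z)⁻¹ * wdMatrix i P z + connectionForm i H z
        + H z * connectionForm i Q z * (H z)⁻¹) * (P z)⁻¹ := by
  have hdet {M : Matrix ι ι ℂ} (hM : IsUnit M) : IsUnit M.det := (isUnit_iff_isUnit_det _).1 hM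
  rw [connectionForm, wdMatrix_mul i (hP.fun_mul hH) hQ, wdMatrix_mul i hP hH]
  simp only [connectionForm, Matrix.mul_inv_rev, Matrix.add_mul, Matrix.mul_add, Matrix.mul_assoc,
    mul_nonsing_inv_cancel_left, hdet hPz, hdet hHz, hdet hQz]

end Connection

section Shear

variable {ι : Type*} [Fintype ι] [DecidableEq ι]

/-- The `B`-field transform `e^β` of `T ⊕ T*`. -/
def shear (β : Matrix ι ι ℂ) : Matrix (ι ⊕ ι) (ι ⊕ ι) ℂ :=
  fromBlocks 1 β 0 1

/-- The extension of a matrix `W` acting on `T` to `T ⊕ T*`, contragredient on `T*`. -/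
def dualExtension (W : Matrix ι ι ℂ) : Matrix (ι ⊕ ι) (ι ⊕ ι) ℂ :=
  fromBlocks W 0 0 (W⁻¹)ᵀ

theorem shear_add (β γ : Matrix ι ι ℂ) : shear (β + γ) = shear β * shear γ := by
  simp [shear, fromBlocks_multiply, add_comm]

theorem isUnit_shear (β : Matrix ι ι ℂ) : IsUnit (shear β) := by
  simp [isUnit_iff_isUnit_det, shear]

theorem inv_shear (β : Matrix ι ι ℂ) : (shear β)⁻¹ = shear (-β) := by
  refine inv_eq_right_inv ?_
  rw [← shear_add, add_neg_cancel, shear, fromBlocks_one]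

theorem dualExtension_mul (V W : Matrix ι ι ℂ) :
    dualExtension (V * W) = dualExtension V * dualExtension W := by
  simp [dualExtension, fromBlocks_multiply, Matrix.mul_inv_rev, transpose_mul]

theorem conjTranspose_dualExtension (W : Matrix ι ι ℂ) :
    (dualExtension W)ᴴ = dualExtension Wᴴ := by
  rw [dualExtension, fromBlocks_conjTranspose, dualExtension, ← conjTranspose_nonsing_inv,
    conjTranspose_zero]
  simp only [conjTranspose, transpose_map, transpose_transpose]

theorem inv_dualExtension {W : Matrix ι ι ℂ} (hW : IsUnit W) :
    (dualExtension W)⁻¹ = dualExtension W⁻¹ := by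
  have hdet : IsUnit W.det := (isUnit_iff_isUnit_det _).1 hW
  refine inv_eq_right_inv ?_
  rw [← dualExtension_mul, mul_nonsing_inv _ hdet, dualExtension]
  simp

theorem isUnit_dualExtension {W : Matrix ι ι ℂ} (hW : IsUnit W) : IsUnit (dualExtension W) := by
  simp [isUnit_iff_isUnit_det, dualExtension, ((isUnit_iff_isUnit_det _).1 hW).ne_zero]

theorem genMetric_eq_shear_mul {n : ℕ} {g : Matrix (Fin n) (Fin n) ℂ} (hg : g.IsHermitian)
    (β : Matrix (Fin n) (Fin n) ℂ) :
    genMetric g β = shear β * dualExtension g * (shear β)ᴴ := by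
  have hconj : (g⁻¹).map (starRingEnd ℂ) = (g⁻¹)ᵀ :=
    congrArg transpose hg.inv.eq
  simp [genMetric, shear, dualExtension, hconj, fromBlocks_multiply, fromBlocks_conjTranspose]

end Shear

section GeneralizedConnection

variable {n : ℕ} (i : Fin n) {g β : (Fin n → ℂ) → Matrix (Fin n) (Fin n) ℂ} {z : Fin n → ℂ}

/-- The lower left block `gᵀ⁻¹·∂ᵢ(β*)·g⁻¹` of the Chern connection form of `genMetric g β`, seen in
the frame `shear β`. -/
def lowerConnection (g β : (Fin n → ℂ) → Matrix (Fin n) (Fin n) ℂ) (z : Fin n → ℂ) :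
    Matrix (Fin n) (Fin n) ℂ :=
  ((g z)⁻¹)ᵀ * wdMatrix i (fun w => (β w)ᴴ) z * (g z)⁻¹

theorem wdMatrix_shear :
    wdMatrix i (fun w => shear (β w)) z = fromBlocks 0 (wdMatrix i β z) 0 0 := by
  simp only [shear, wdMatrix_fromBlocks, wdMatrix_const]

theorem connectionForm_conjTranspose_shear :
    connectionForm i (fun w => (shear (β w))ᴴ) z =
      fromBlocks 0 0 (wdMatrix i (fun w => (β w)ᴴ) z) 0 := by
  rw [connectionForm, ← conjTranspose_nonsing_inv, inv_shear]
  simp only [shear, fromBlocks_conjTranspose, wdMatrix_fromBlocks, conjTranspose_one,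
    conjTranspose_zero, wdMatrix_const, fromBlocks_multiply]
  simp

theorem connectionForm_dualExtension (hg : DifferentiableAt ℝ g z) (hz : IsUnit (g z)) :
    connectionForm i (fun w => dualExtension (g w)) z =
      fromBlocks (connectionForm i g z) 0 0 (-(connectionForm i g z)ᵀ) := by
  rw [← connectionForm_transpose_inv i hg hz, connectionForm, inv_dualExtension hz]
  simp only [dualExtension, wdMatrix_fromBlocks, fromBlocks_multiply, wdMatrix_const,
    connectionForm, transpose_nonsing_inv]
  simp

theorem connectionForm_genMetric (hg : DifferentiableAt ℝ g z) (hβ : DifferentiableAt ℝ β z)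
    (hpos : ∀ᶠ w in nhds z, (g w).PosDef) :
    connectionForm i (fun w => genMetric (g w) (β w)) z =
      shear (β z) * fromBlocks (connectionForm i g z) (wdMatrix i β z) (lowerConnection i g β z)
        (-(connectionForm i g z)ᵀ) * shear (-β z) := by
  have hgz : IsUnit (g z) := hpos.self_of_nhds.isUnit
  have hcongr : (fun w => genMetric (g w) (β w)) =ᶠ[nhds z]
      fun w => shear (β w) * dualExtension (g w) * (shear (β w))ᴴ :=
    hpos.mono fun w hw => genMetric_eq_shear_mul hw.isHermitian (β w)
  have hconst (A : Matrix (Fin n) (Fin n) ℂ) : DifferentiableAt ℝ (fun _ => A) z :=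
    differentiableAt_const A
  have hshear : DifferentiableAt ℝ (fun w => shear (β w)) z :=
    differentiableAt_fromBlocks (hconst 1) hβ (hconst 0) (hconst 1)
  have hdiag : DifferentiableAt ℝ (fun w => dualExtension (g w)) z :=
    differentiableAt_fromBlocks hg (hconst 0) (hconst 0)
      (differentiableAt_transpose (differentiableAt_inv_matrix hg hgz))
  rw [connectionForm_congr i hcongr, connectionForm_mul_mul i hshear hdiag
    (differentiableAt_conjTranspose hshear) (isUnit_shear _)
    (isUnit_dualExtension hgz) (isUnit_shear _).star, inv_shear, wdMatrix_shear,
    connectionForm_dualExtension i hg hgz, connectionForm_conjTranspose_shear,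
    inv_dualExtension hgz]
  simp [lowerConnection, shear, dualExtension, fromBlocks_multiply, fromBlocks_add,
    Matrix.mul_assoc]

end GeneralizedConnection

section Frame

variable {ι : Type*} [Fintype ι] [DecidableEq ι]

open scoped MatrixOrder in
theorem exists_isUnit_eq_mul_conjTranspose {g : Matrix ι ι ℂ} (hg : g.PosDef) :
    ∃ W : Matrix ι ι ℂ, IsUnit W ∧ g = W * Wᴴ :=
  CStarAlgebra.isStrictlyPositive_iff_eq_mul_star_self.1 hg.isStrictlyPositive

/-- The unitary frame of `genMetric (W * Wᴴ) β` induced by the unitary frame `W` of `W * Wᴴ`. -/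
def genFrame (W β : Matrix ι ι ℂ) : Matrix (ι ⊕ ι) (ι ⊕ ι) ℂ :=
  shear β * dualExtension W

theorem genMetric_eq_genFrame_mul_conjTranspose {n : ℕ} {g W : Matrix (Fin n) (Fin n) ℂ}
    (hW : g = W * Wᴴ) (β : Matrix (Fin n) (Fin n) ℂ) :
    genMetric g β = genFrame W β * (genFrame W β)ᴴ := by
  rw [hW, genMetric_eq_shear_mul (isHermitian_mul_conjTranspose_self W), dualExtension_mul,
    ← conjTranspose_dualExtension, genFrame, conjTranspose_mul]
  simp only [Matrix.mul_assoc]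

/-- The matrix of the endomorphism `φ` in the frame `V`. -/
def framed (V φ : Matrix ι ι ℂ) : Matrix ι ι ℂ :=
  V⁻¹ * φ * V

theorem framed_sub (V φ ψ : Matrix ι ι ℂ) : framed V (φ - ψ) = framed V φ - framed V ψ := by
  simp only [framed, Matrix.mul_sub, Matrix.sub_mul]

theorem framed_genFrame {W : Matrix ι ι ℂ} (hW : IsUnit W)
    (β γ a b c d : Matrix ι ι ℂ) :
    framed (genFrame W β) (shear γ * fromBlocks a b c d * shear (-γ)) =
      dualExtension W⁻¹ * (shear (γ - β) * fromBlocks a b c d * shear (-(γ - β))) *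
        dualExtension W := by
  rw [framed, genFrame, Matrix.mul_inv_rev, inv_dualExtension hW, inv_shear, neg_sub,
    sub_eq_neg_add γ, sub_eq_neg_add β, shear_add, shear_add]
  simp only [Matrix.mul_assoc]

theorem toBlocks₁₁_framed_genFrame {W : Matrix ι ι ℂ} (hW : IsUnit W)
    (β γ a b c d : Matrix ι ι ℂ) :
    (framed (genFrame W β) (shear γ * fromBlocks a b c d * shear (-γ))).toBlocks₁₁ =
      W⁻¹ * (a + (γ - β) * c) * W := by
  rw [framed_genFrame hW]
  simp only [shear, dualExtension, fromBlocks_multiply, toBlocks_fromBlocks₁₁]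
  simp

theorem toBlocks₂₂_framed_genFrame {W : Matrix ι ι ℂ} (hW : IsUnit W)
    (β γ a b c d : Matrix ι ι ℂ) :
    (framed (genFrame W β) (shear γ * fromBlocks a b c d * shear (-γ))).toBlocks₂₂ =
      Wᵀ * (d - c * (γ - β)) * (W⁻¹)ᵀ := by
  rw [framed_genFrame hW]
  simp only [shear, dualExtension, fromBlocks_multiply, toBlocks_fromBlocks₂₂,
    nonsing_inv_nonsing_inv _ ((isUnit_iff_isUnit_det _).1 hW)]
  simp only [Matrix.zero_mul, Matrix.mul_zero, Matrix.one_mul, Matrix.mul_one, zero_add, add_zero]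
  noncomm_ring

end Frame

section FrameNorm

/-- The squared norm of an `E`-valued covector with components `M`, in the unitary frame whose
change-of-frame matrix is `S`. -/
def frameNormSq {ι κ E : Type*} [Fintype ι] [Fintype κ] [SeminormedAddCommGroup E] [Module ℂ E]
    (S : Matrix κ ι ℂ) (M : ι → E) : ℝ :=
  ∑ k, ‖∑ i, S k i • M i‖ ^ 2

variable {ι κ m : Type*} [Fintype ι] [Fintype κ] [Fintype m]

theorem frameNormSq_nonneg {E : Type*} [SeminormedAddCommGroup E] [Module ℂ E]
    (S : Matrix κ ι ℂ) (M : ι → E) : 0 ≤ frameNormSq S M :=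
  Finset.sum_nonneg fun _ _ => sq_nonneg _

theorem norm_sq_le_four_point {E : Type*} [SeminormedAddCommGroup E] (x r t : E) :
    ‖x‖ ^ 2 ≤ ‖x - r‖ ^ 2 + ‖x - t‖ ^ 2 + ‖r‖ ^ 2 + ‖t‖ ^ 2 := by
  have hr : ‖x‖ ≤ ‖x - r‖ + ‖r‖ := by simpa using norm_add_le (x - r) r
  have ht : ‖x‖ ≤ ‖x - t‖ + ‖t‖ := by simpa using norm_add_le (x - t) t
  have hr2 := pow_le_pow_left₀ (norm_nonneg x) hr 2
  have ht2 := pow_le_pow_left₀ (norm_nonneg x) ht 2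
  linarith [add_sq_le (a := ‖x - r‖) (b := ‖r‖), add_sq_le (a := ‖x - t‖) (b := ‖t‖)]

theorem frameNormSq_le_four_point {E : Type*} [SeminormedAddCommGroup E] [Module ℂ E]
    (S : Matrix κ ι ℂ) (M R T : ι → E) :
    frameNormSq S M ≤ frameNormSq S (M - R) + frameNormSq S (M - T) +
      frameNormSq S R + frameNormSq S T := by
  simp only [frameNormSq, ← Finset.sum_add_distrib, Pi.sub_apply, smul_sub, Finset.sum_sub_distrib]
  exact Finset.sum_le_sum fun k _ => norm_sq_le_four_point _ _ _

theorem frobenius_norm_sq_eq_sum {ν : Type*} [Fintype ν] (M : Matrix m ν ℂ) :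
    ‖M‖ ^ 2 = ∑ a, ∑ b, ‖M a b‖ ^ 2 := by
  have hsum : 0 ≤ ∑ a, ∑ b, ‖M a b‖ ^ 2 := by positivity
  simp only [frobenius_norm_def, ← Real.sqrt_eq_rpow, Real.rpow_two, Real.sq_sqrt hsum]

theorem frobenius_norm_sq_eq_trace {ν : Type*} [Fintype ν] (M : Matrix m ν ℂ) :
    (‖M‖ ^ 2 : ℝ) = (M * Mᴴ).trace := by
  simp [frobenius_norm_sq_eq_sum, trace, mul_apply, Complex.mul_conj, Complex.normSq_eq_norm_sq]

theorem frameNormSq_le {E : Type*} [SeminormedAddCommGroup E] [NormedSpace ℂ E]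
    (S : Matrix κ ι ℂ) (M : ι → E) : frameNormSq S M ≤ ‖S‖ ^ 2 * ∑ i, ‖M i‖ ^ 2 := by
  rw [frobenius_norm_sq_eq_sum, Finset.sum_mul]
  refine Finset.sum_le_sum fun k _ => ?_
  calc ‖∑ i, S k i • M i‖ ^ 2 ≤ (∑ i, ‖S k i‖ * ‖M i‖) ^ 2 := by
        gcongr
        exact norm_sum_le_of_le _ fun i _ => norm_smul_le _ _
    _ ≤ (∑ i, ‖S k i‖ ^ 2) * ∑ i, ‖M i‖ ^ 2 := Finset.sum_mul_sq_le_sq_mul_sq _ _ _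

theorem frameNormSq_mul_le {μ ν : Type*} [Fintype μ] [Fintype ν] (S : Matrix κ ι ℂ)
    (M : ι → Matrix m μ ℂ) (N : ι → Matrix μ ν ℂ) :
    frameNormSq S (fun i => M i * N i) ≤ ‖S‖ ^ 2 * ∑ i, (‖M i‖ * ‖N i‖) ^ 2 := by
  refine (frameNormSq_le _ _).trans ?_
  gcongr
  exact frobenius_norm_mul _ _

theorem norm_toBlocks_sq_add_le {ν : Type*} [Fintype ν] (M : Matrix (m ⊕ ν) (m ⊕ ν) ℂ) :
    ‖M.toBlocks₁₁‖ ^ 2 + ‖M.toBlocks₂₂‖ ^ 2 ≤ ‖M‖ ^ 2 := by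
  simp only [frobenius_norm_sq_eq_sum, Fintype.sum_sum_type, Finset.sum_add_distrib]
  have h₁₂ : 0 ≤ ∑ a, ∑ b, ‖M (Sum.inl a) (Sum.inr b)‖ ^ 2 := by positivity
  have h₂₁ : 0 ≤ ∑ a, ∑ b, ‖M (Sum.inr a) (Sum.inl b)‖ ^ 2 := by positivity
  simp only [toBlocks₁₁, toBlocks₂₂, of_apply]
  linarith

theorem frameNormSq_toBlocks_add_le {ν : Type*} [Fintype ν]
    (S : Matrix κ ι ℂ) (M : ι → Matrix (m ⊕ ν) (m ⊕ ν) ℂ) :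
    frameNormSq S (fun i => (M i).toBlocks₁₁) + frameNormSq S (fun i => (M i).toBlocks₂₂) ≤
      frameNormSq S M := by
  rw [frameNormSq, frameNormSq, ← Finset.sum_add_distrib]
  refine Finset.sum_le_sum fun k _ => ?_
  have h₁₁ : ∑ i, S k i • (M i).toBlocks₁₁ = (∑ i, S k i • M i).toBlocks₁₁ := by
    ext a b
    simp only [toBlocks₁₁, of_apply, Matrix.sum_apply, Matrix.smul_apply]
  have h₂₂ : ∑ i, S k i • (M i).toBlocks₂₂ = (∑ i, S k i • M i).toBlocks₂₂ := by
    ext a b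
    simp only [toBlocks₂₂, of_apply, Matrix.sum_apply, Matrix.smul_apply]
  rw [h₁₁, h₂₂]
  exact norm_toBlocks_sq_add_le _

theorem frameNormSq_neg_transpose {ν : Type*} [Fintype ν] (S : Matrix κ ι ℂ)
    (M : ι → Matrix m ν ℂ) : frameNormSq S (fun i => -(M i)ᵀ) = frameNormSq S M := by
  refine Finset.sum_congr rfl fun k _ => ?_
  rw [← frobenius_norm_transpose, ← norm_neg]
  simp [transpose_sum]

theorem frameNormSq_le_of_toBlocks (S : Matrix κ ι ℂ) {D : ι → Matrix (m ⊕ m) (m ⊕ m) ℂ}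
    {M R T : ι → Matrix m m ℂ} (h₁₁ : ∀ i, (D i).toBlocks₁₁ = M i - R i)
    (h₂₂ : ∀ i, (D i).toBlocks₂₂ = -(M i - T i)ᵀ) :
    frameNormSq S M ≤ frameNormSq S D + frameNormSq S R + frameNormSq S T := by
  have hblocks := frameNormSq_toBlocks_add_le S D
  simp only [h₁₁, h₂₂, frameNormSq_neg_transpose] at hblocks
  have hsplit : frameNormSq S M ≤ frameNormSq S (fun i => M i - R i) +
      frameNormSq S (fun i => M i - T i) + frameNormSq S R + frameNormSq S T :=
    frameNormSq_le_four_point S M R T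
  linarith

theorem sum_contraction_eq_trace {ν : Type*} [Fintype ν] (S : Matrix κ m ℂ) (V : Matrix ν ι ℂ)
    (X Y : Matrix m ν ℂ) :
    ∑ A, ∑ B, ∑ D, ∑ E, (Sᴴ * S) B A * (V * Vᴴ) D E * X A D * starRingEnd ℂ (Y B E) =
      (S * X * V * (S * Y * V)ᴴ).trace := by
  have hcycle : (S * X * V * (S * Y * V)ᴴ).trace = (Sᴴ * S * X * (V * Vᴴ) * Yᴴ).trace := by
    rw [conjTranspose_mul, conjTranspose_mul, ← Matrix.mul_assoc, ← Matrix.mul_assoc,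
      trace_mul_comm]
    simp only [Matrix.mul_assoc]
  rw [hcycle, Finset.sum_comm]
  generalize Sᴴ * S = Q
  generalize V * Vᴴ = H
  simp only [trace, diag_apply, Matrix.mul_apply, Finset.sum_mul, conjTranspose_apply,
    starRingEnd_apply]
  refine Finset.sum_congr rfl fun B _ => ?_
  rw [Finset.sum_comm_cycle]
  refine Finset.sum_congr rfl fun E _ => ?_
  rw [Finset.sum_comm]
  refine Finset.sum_congr rfl fun D _ => Finset.sum_congr rfl fun A _ => ?_
  ring

theorem sum_mul_trace_eq_frameNormSq {ν : Type*} [Fintype ν] (S : Matrix κ ι ℂ)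
    (M : ι → Matrix m ν ℂ) :
    ∑ i, ∑ j, (Sᴴ * S) j i * (M i * (M j)ᴴ).trace = frameNormSq S M := by
  simp only [frameNormSq, Complex.ofReal_sum, frobenius_norm_sq_eq_trace, conjTranspose_sum,
    Matrix.sum_mul, Matrix.mul_sum, trace_sum, Matrix.mul_apply, Finset.sum_mul, conjTranspose_smul,
    Matrix.smul_mul, Matrix.mul_smul, trace_smul, smul_eq_mul, conjTranspose_apply, Finset.mul_sum]
  rw [Finset.sum_comm_cycle]
  refine Finset.sum_congr rfl fun k _ => ?_
  rw [Finset.sum_comm]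
  refine Finset.sum_congr rfl fun j _ => Finset.sum_congr rfl fun i _ => ?_
  ring

end FrameNorm

section UpsNorm

variable {ι : Type*} [Fintype ι] [DecidableEq ι]

theorem inv_mul_conjTranspose (W : Matrix ι ι ℂ) :
    (W * Wᴴ)⁻¹ = (W⁻¹)ᴴ * W⁻¹ := by
  rw [Matrix.mul_inv_rev, conjTranspose_nonsing_inv]

theorem upsNormS_eq_frameNormSq {n : ℕ} {z : Fin n → ℂ}
    {g : (Fin n → ℂ) → Matrix (Fin n) (Fin n) ℂ} {G : (Fin n → ℂ) → Matrix ι ι ℂ}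
    (Gt : (Fin n → ℂ) → Matrix ι ι ℂ) {W : Matrix (Fin n) (Fin n) ℂ} {V : Matrix ι ι ℂ}
    (hW : g z = W * Wᴴ) (hV : G z = V * Vᴴ) :
    upsNormS g G Gt G z =
      frameNormSq W⁻¹ fun i => framed V (connectionForm i G z - connectionForm i Gt z) := by
  rw [← sum_mul_trace_eq_frameNormSq]
  refine Finset.sum_congr rfl fun i _ => Finset.sum_congr rfl fun j _ => ?_
  rw [framed, framed, ← sum_contraction_eq_trace, hW, hV, inv_mul_conjTranspose,
    inv_mul_conjTranspose]
  simp only [upsS_eq_connectionForm_sub, Finset.mul_sum, mul_assoc]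

theorem upsNormS_genMetric_re_nonneg {n : ℕ} {g : (Fin n → ℂ) → Matrix (Fin n) (Fin n) ℂ}
    {z : Fin n → ℂ} (hg : (g z).PosDef) (β : (Fin n → ℂ) → Matrix (Fin n) (Fin n) ℂ)
    (Gt : (Fin n → ℂ) → Matrix (Fin n ⊕ Fin n) (Fin n ⊕ Fin n) ℂ) :
    0 ≤ (upsNormS g (fun w => genMetric (g w) (β w)) Gt
      (fun w => genMetric (g w) (β w)) z).re := by
  obtain ⟨W, -, hW⟩ := exists_isUnit_eq_mul_conjTranspose hg
  rw [upsNormS_eq_frameNormSq Gt hW (genMetric_eq_genFrame_mul_conjTranspose hW _),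
    Complex.ofReal_re]
  exact frameNormSq_nonneg _ _

theorem sum_mul_star_mul_inv_eq_norm_sq {g W : Matrix ι ι ℂ} (hW : g = W * Wᴴ)
    (β : Matrix ι ι ℂ) :
    ∑ i, ∑ k, ∑ j, ∑ l, β i k * starRingEnd ℂ (β j l) * g⁻¹ j i * g⁻¹ l k =
      (‖W⁻¹ * β * (W⁻¹)ᵀ‖ ^ 2 : ℝ) := by
  have hdual (k l : ι) : g⁻¹ l k = ((W⁻¹)ᵀ * ((W⁻¹)ᵀ)ᴴ) k l := by
    rw [hW, inv_mul_conjTranspose, ← transpose_apply ((W⁻¹)ᴴ * W⁻¹), transpose_mul]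
    rfl
  rw [frobenius_norm_sq_eq_trace, ← sum_contraction_eq_trace]
  refine Finset.sum_congr rfl fun i _ => ?_
  rw [Finset.sum_comm]
  refine Finset.sum_congr rfl fun j _ => Finset.sum_congr rfl fun k _ =>
    Finset.sum_congr rfl fun l _ => ?_
  rw [hdual k l, hW, inv_mul_conjTranspose]
  ring

end UpsNorm

section ConnectionDifference

variable {n : ℕ} {g gt β βt : (Fin n → ℂ) → Matrix (Fin n) (Fin n) ℂ} {z : Fin n → ℂ}
  {W : Matrix (Fin n) (Fin n) ℂ}
  (hg : DifferentiableAt ℝ g z) (hgt : DifferentiableAt ℝ gt z)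
  (hβ : DifferentiableAt ℝ β z) (hβt : DifferentiableAt ℝ βt z)
  (hpos : ∀ᶠ w in nhds z, (g w).PosDef) (hpost : ∀ᶠ w in nhds z, (gt w).PosDef)
  (hW : IsUnit W)

include hg hgt hβ hβt hpos hpost hW

theorem toBlocks₁₁_framed_connectionForm_sub (i : Fin n) :
    (framed (genFrame W (β z)) (connectionForm i (fun w => genMetric (g w) (β w)) z -
      connectionForm i (fun w => genMetric (gt w) (βt w)) z)).toBlocks₁₁ =
      framed W (connectionForm i g z - connectionForm i gt z) -
        W⁻¹ * (βt z - β z) * (W⁻¹)ᵀ * (Wᵀ * lowerConnection i gt βt z * W) := by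
  have hdet : IsUnit W.det := (isUnit_iff_isUnit_det _).1 hW
  rw [connectionForm_genMetric i hg hβ hpos, connectionForm_genMetric i hgt hβt hpost, framed_sub]
  refine (congrArg₂ (· - ·) (toBlocks₁₁_framed_genFrame hW _ _ _ _ _ _)
    (toBlocks₁₁_framed_genFrame hW _ _ _ _ _ _)).trans ?_
  have hcancel (X : Matrix (Fin n) (Fin n) ℂ) : (W⁻¹)ᵀ * (Wᵀ * X) = X := by
    rw [← Matrix.mul_assoc, ← transpose_mul, mul_nonsing_inv _ hdet, transpose_one, Matrix.one_mul]
  simp only [framed, Matrix.mul_assoc, hcancel]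
  noncomm_ring

theorem toBlocks₂₂_framed_connectionForm_sub (i : Fin n) :
    (framed (genFrame W (β z)) (connectionForm i (fun w => genMetric (g w) (β w)) z -
      connectionForm i (fun w => genMetric (gt w) (βt w)) z)).toBlocks₂₂ =
      -(framed W (connectionForm i g z - connectionForm i gt z) -
        (W⁻¹ * (βt z - β z) * (W⁻¹)ᵀ)ᵀ * (Wᵀ * lowerConnection i gt βt z * W)ᵀ)ᵀ := by
  have hdet : IsUnit W.det := (isUnit_iff_isUnit_det _).1 hW
  rw [connectionForm_genMetric i hg hβ hpos, connectionForm_genMetric i hgt hβt hpost, framed_sub]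
  refine (congrArg₂ (· - ·) (toBlocks₂₂_framed_genFrame hW _ _ _ _ _ _)
    (toBlocks₂₂_framed_genFrame hW _ _ _ _ _ _)).trans ?_
  simp only [framed, Matrix.mul_assoc, mul_nonsing_inv_cancel_left _ _ hdet, transpose_sub,
    transpose_transpose, transpose_mul]
  noncomm_ring

theorem upsNormS_re_le_upsNormS_genMetric_re_add (hgW : g z = W * Wᴴ) :
    (upsNormS g g gt g z).re ≤
      (upsNormS g (fun w => genMetric (g w) (β w)) (fun w => genMetric (gt w) (βt w))
        (fun w => genMetric (g w) (β w)) z).re +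
      2 * (‖W⁻¹‖ ^ 2 * ∑ i, (‖W⁻¹ * (βt z - β z) * (W⁻¹)ᵀ‖ *
        ‖Wᵀ * lowerConnection i gt βt z * W‖) ^ 2) := by
  rw [upsNormS_eq_frameNormSq gt hgW hgW, Complex.ofReal_re,
    upsNormS_eq_frameNormSq _ hgW (genMetric_eq_genFrame_mul_conjTranspose hgW _),
    Complex.ofReal_re]
  have hframe := frameNormSq_le_of_toBlocks W⁻¹
    (toBlocks₁₁_framed_connectionForm_sub hg hgt hβ hβt hpos hpost hW)
    (toBlocks₂₂_framed_connectionForm_sub hg hgt hβ hβt hpos hpost hW)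
  set Γ := W⁻¹ * (βt z - β z) * (W⁻¹)ᵀ
  have hleft := frameNormSq_mul_le W⁻¹ (fun _ => Γ) fun i => Wᵀ * lowerConnection i gt βt z * W
  have hright := frameNormSq_mul_le W⁻¹ (fun _ => Γᵀ)
    fun i => (Wᵀ * lowerConnection i gt βt z * W)ᵀ
  simp only [frobenius_norm_transpose] at hright
  linarith

end ConnectionDifference

section Bounds

variable {ι : Type*} [Fintype ι]

theorem frobenius_norm_le_card_mul {M : Matrix ι ι ℂ} {B : ℝ} (hM : ∀ a b, ‖M a b‖ ≤ B) :
    ‖M‖ ≤ Fintype.card ι * |B| := by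
  refine (sq_le_sq₀ (norm_nonneg M) (by positivity)).1 ?_
  calc ‖M‖ ^ 2 = ∑ a, ∑ b, ‖M a b‖ ^ 2 := frobenius_norm_sq_eq_sum M
    _ ≤ ∑ _a : ι, ∑ _b : ι, |B| ^ 2 := by
      gcongr with a _ b _
      exact (hM a b).trans (le_abs_self B)
    _ = (Fintype.card ι * |B|) ^ 2 := by
      simp only [Finset.sum_const, Finset.card_univ, nsmul_eq_mul]
      ring

theorem frobenius_norm_sq_le_of_posSemidef_sub {W H : Matrix ι ι ℂ} {Λ B : ℝ} (hΛ : 0 ≤ Λ)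
    (h : ((Λ : ℂ) • H - W * Wᴴ).PosSemidef) (hH : ∀ a b, ‖H a b‖ ≤ B) :
    ‖W‖ ^ 2 ≤ Λ * (Fintype.card ι * |B|) := by
  have htrace : ((‖W‖ ^ 2 : ℝ) : ℂ) ≤ Λ * H.trace := by
    rw [frobenius_norm_sq_eq_trace, ← sub_nonneg]
    simpa [trace_sub, trace_smul] using h.trace_nonneg
  have hre : ‖W‖ ^ 2 ≤ Λ * H.trace.re := by
    simpa only [Complex.ofReal_re, Complex.re_ofReal_mul] using (Complex.le_def.1 htrace).1
  refine hre.trans (mul_le_mul_of_nonneg_left ?_ hΛ)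
  calc H.trace.re ≤ ‖H.trace‖ := Complex.re_le_norm _
    _ ≤ ∑ _a : ι, |B| := norm_sum_le_of_le _ fun a _ => (hH a a).trans (le_abs_self B)
    _ = Fintype.card ι * |B| := by simp

theorem norm_wdMatrix_conjTranspose_le {n : ℕ} (i : Fin n) {β : (Fin n → ℂ) → Matrix ι ι ℂ}
    {z : Fin n → ℂ} {B : ℝ} (h : ∀ a b, ‖wdb i (fun w => β w a b) z‖ ≤ B) :
    ‖wdMatrix i (fun w => (β w)ᴴ) z‖ ≤ Fintype.card ι * |B| := by
  refine frobenius_norm_le_card_mul fun a b => ?_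
  change ‖wd i (fun w => star (β w b a)) z‖ ≤ B
  rw [wd_star, norm_star]
  exact h b a

variable [DecidableEq ι]

open scoped Matrix.Norms.L2Operator MatrixOrder in
theorem posSemidef_inv_sub_inv {A B : Matrix ι ι ℂ} (hA : A.PosDef) (h : (B - A).PosSemidef) :
    (A⁻¹ - B⁻¹).PosSemidef := by
  simp_rw [nonsing_inv_eq_ringInverse]
  exact CStarAlgebra.ringInverse_le_ringInverse (A := Matrix ι ι ℂ) h hA.isStrictlyPositive

theorem posSemidef_smul_inv_sub_inv {g gt : Matrix ι ι ℂ} {Λ : ℝ} (hΛ : 0 < Λ) (hgt : gt.PosDef)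
    (h : (g - (Λ : ℂ)⁻¹ • gt).PosSemidef) : ((Λ : ℂ) • gt⁻¹ - g⁻¹).PosSemidef := by
  have hpos : ((Λ : ℂ)⁻¹ • gt).PosDef := hgt.smul (by positivity)
  have hinv : ((Λ : ℂ)⁻¹ • gt)⁻¹ = (Λ : ℂ) • gt⁻¹ := by
    refine inv_eq_right_inv ?_
    rw [smul_mul_smul_comm, inv_mul_cancel₀ (by exact_mod_cast hΛ.ne'),
      mul_nonsing_inv _ ((isUnit_iff_isUnit_det _).1 hgt.isUnit), one_smul]
  rw [← hinv]
  exact posSemidef_inv_sub_inv hpos h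

theorem norm_inv_sq_le_of_posSemidef_sub {g gt W : Matrix ι ι ℂ} {Λ B : ℝ} (hΛ : 0 < Λ)
    (hgt : gt.PosDef) (h : (g - (Λ : ℂ)⁻¹ • gt).PosSemidef) (hW : g = W * Wᴴ)
    (hB : ∀ a b, ‖gt⁻¹ a b‖ ≤ B) : ‖W⁻¹‖ ^ 2 ≤ Λ * (Fintype.card ι * |B|) := by
  have hginv : g⁻¹ = (W⁻¹)ᴴ * ((W⁻¹)ᴴ)ᴴ := by
    rw [hW, inv_mul_conjTranspose, conjTranspose_conjTranspose]
  have hinv := posSemidef_smul_inv_sub_inv hΛ hgt h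
  rw [hginv] at hinv
  rw [← frobenius_norm_conjTranspose]
  exact frobenius_norm_sq_le_of_posSemidef_sub hΛ.le hinv hB

theorem norm_inv_mul_sub_mul_le (W β βt : Matrix ι ι ℂ) :
    ‖W⁻¹ * (βt - β) * (W⁻¹)ᵀ‖ ≤ ‖W⁻¹ * β * (W⁻¹)ᵀ‖ + ‖W⁻¹‖ ^ 2 * ‖βt‖ := by
  have hβt : ‖W⁻¹ * βt * (W⁻¹)ᵀ‖ ≤ ‖W⁻¹‖ ^ 2 * ‖βt‖ := by
    calc ‖W⁻¹ * βt * (W⁻¹)ᵀ‖ ≤ ‖W⁻¹‖ * ‖βt‖ * ‖(W⁻¹)ᵀ‖ := norm_mul₃_le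
      _ = ‖W⁻¹‖ ^ 2 * ‖βt‖ := by rw [frobenius_norm_transpose]; ring
  rw [Matrix.mul_sub, Matrix.sub_mul]
  linarith [norm_sub_le (W⁻¹ * βt * (W⁻¹)ᵀ) (W⁻¹ * β * (W⁻¹)ᵀ)]

theorem norm_transpose_mul_lowerConnection_mul_le {n : ℕ} (i : Fin n) (W : Matrix (Fin n) (Fin n) ℂ)
    (g β : (Fin n → ℂ) → Matrix (Fin n) (Fin n) ℂ) (z : Fin n → ℂ) :
    ‖Wᵀ * lowerConnection i g β z * W‖ ≤
      ‖W‖ ^ 2 * ‖(g z)⁻¹‖ ^ 2 * ‖wdMatrix i (fun w => (β w)ᴴ) z‖ := by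
  have hlower : ‖lowerConnection i g β z‖ ≤
      ‖(g z)⁻¹‖ * ‖wdMatrix i (fun w => (β w)ᴴ) z‖ * ‖(g z)⁻¹‖ :=
    norm_mul₃_le.trans_eq (by rw [frobenius_norm_transpose])
  calc ‖Wᵀ * lowerConnection i g β z * W‖ ≤ ‖W‖ * ‖lowerConnection i g β z‖ * ‖W‖ :=
        norm_mul₃_le.trans_eq (by rw [frobenius_norm_transpose])
    _ ≤ ‖W‖ * (‖(g z)⁻¹‖ * ‖wdMatrix i (fun w => (β w)ᴴ) z‖ * ‖(g z)⁻¹‖) * ‖W‖ := by gcongr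
    _ = ‖W‖ ^ 2 * ‖(g z)⁻¹‖ ^ 2 * ‖wdMatrix i (fun w => (β w)ᴴ) z‖ := by ring

end Bounds

theorem connection_difference_comparison_general (n : ℕ) (Λ B : ℝ) (hΛ : 0 < Λ) :
    ∃ K : ℝ, ∀ g gt β βt : (Fin n → ℂ) → Matrix (Fin n) (Fin n) ℂ, ∀ z : Fin n → ℂ,
      (∀ a b, DifferentiableAt ℝ (fun w => g w a b) z) →
      (∀ a b, DifferentiableAt ℝ (fun w => gt w a b) z) →
      (∀ a b, DifferentiableAt ℝ (fun w => β w a b) z) →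
      (∀ a b, DifferentiableAt ℝ (fun w => βt w a b) z) →
      (∀ᶠ w in nhds z, (g w).PosDef) → (∀ᶠ w in nhds z, (gt w).PosDef) →
      (g z - (Λ : ℂ)⁻¹ • gt z).PosSemidef → ((Λ : ℂ) • gt z - g z).PosSemidef →
      (∑ i, ∑ k, ∑ j, ∑ l,
        β z i k * starRingEnd ℂ (β z j l) * (g z)⁻¹ j i * (g z)⁻¹ l k).re ≤ Λ →
      (∀ a b, ‖gt z a b‖ ≤ B ∧ ‖(gt z)⁻¹ a b‖ ≤ B ∧ ‖βt z a b‖ ≤ B ∧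
        ∀ i, ‖wdb i (fun w => βt w a b) z‖ ≤ B) →
      (upsNormS g g gt g z).re ≤
        (upsNormS g (fun w => genMetric (g w) (β w)) (fun w => genMetric (gt w) (βt w))
          (fun w => genMetric (g w) (β w)) z).re + K := by
  obtain ⟨b, hb⟩ : ∃ b : ℝ, b = Fintype.card (Fin n) * |B| := ⟨_, rfl⟩
  have hb0 : 0 ≤ b := by rw [hb]; positivity
  refine ⟨2 * (Λ * b * ∑ _i : Fin n, ((√Λ + Λ * b * b) * (Λ * b * b ^ 2 * b)) ^ 2), ?_⟩
  intro g gt β βt z hg hgt hβ hβt hpos hpost hlower hupper hβnorm hB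
  obtain ⟨W, hW, hgW⟩ := exists_isUnit_eq_mul_conjTranspose hpos.self_of_nhds
  have hmain := upsNormS_re_le_upsNormS_genMetric_re_add (differentiableAt_matrix_iff.2 hg)
    (differentiableAt_matrix_iff.2 hgt) (differentiableAt_matrix_iff.2 hβ)
    (differentiableAt_matrix_iff.2 hβt) hpos hpost hW hgW
  have hWsq : ‖W‖ ^ 2 ≤ Λ * b := by
    rw [hgW] at hupper
    exact hb ▸ frobenius_norm_sq_le_of_posSemidef_sub hΛ.le hupper fun a c => (hB a c).1
  have hWinvsq : ‖W⁻¹‖ ^ 2 ≤ Λ * b := hb ▸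
    norm_inv_sq_le_of_posSemidef_sub hΛ hpost.self_of_nhds hlower hgW fun a c => (hB a c).2.1
  have hΓ : ‖W⁻¹ * (βt z - β z) * (W⁻¹)ᵀ‖ ≤ √Λ + Λ * b * b := by
    have hβW : ‖W⁻¹ * β z * (W⁻¹)ᵀ‖ ≤ √Λ := by
      rw [sum_mul_star_mul_inv_eq_norm_sq hgW, Complex.ofReal_re] at hβnorm
      exact Real.le_sqrt_of_sq_le hβnorm
    have hβtb : ‖βt z‖ ≤ b := hb ▸ frobenius_norm_le_card_mul fun a c => (hB a c).2.2.1
    refine (norm_inv_mul_sub_mul_le _ _ _).trans ?_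
    gcongr
  have hC (i : Fin n) : ‖Wᵀ * lowerConnection i gt βt z * W‖ ≤ Λ * b * b ^ 2 * b := by
    refine (norm_transpose_mul_lowerConnection_mul_le _ _ _ _ _).trans ?_
    have hgtb : ‖(gt z)⁻¹‖ ≤ b := hb ▸ frobenius_norm_le_card_mul fun a c => (hB a c).2.1
    have hdβtb : ‖wdMatrix i (fun w => (βt w)ᴴ) z‖ ≤ b :=
      hb ▸ norm_wdMatrix_conjTranspose_le i fun a c => (hB a c).2.2.2 i
    gcongr
  refine hmain.trans ?_
  gcongr
  exact hC _

/-- Lemma 3.5: pointwise comparison of connection differences. If at `z`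
the metrics satisfy `Λ⁻¹·g̃ ≤ g ≤ Λ·g̃` and `|β|²_g ≤ Λ`, then
`|Υ^g|²_g ≤ Λ²·|Υ|²_{g⁻¹,G⁻¹,G} + K` where `K` depends only on `n`, `Λ` and an upper
bound `B` at `z` for the entries of `g̃`, `g̃⁻¹`, `β̃` and their first Wirtinger derivatives. -/
theorem connection_difference_comparison (n : ℕ) (hn : 0 < n) (Λ B : ℝ) (hΛ : 1 ≤ Λ) :
    ∃ K : ℝ,
      ∀ (U : Set (Fin n → ℂ)), IsOpen U →
      ∀ g gt β βt : (Fin n → ℂ) → Matrix (Fin n) (Fin n) ℂ, ∀ z : Fin n → ℂ, z ∈ U →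
        (∀ a b : Fin n, ContDiffOn ℝ 1 (fun w => g w a b) U) →
        (∀ a b : Fin n, ContDiffOn ℝ 1 (fun w => gt w a b) U) →
        (∀ a b : Fin n, ContDiffOn ℝ 1 (fun w => β w a b) U) →
        (∀ a b : Fin n, ContDiffOn ℝ 1 (fun w => βt w a b) U) →
        (∀ w ∈ U, (g w).PosDef) → (∀ w ∈ U, (gt w).PosDef) →
        (∀ w ∈ U, (β w)ᵀ = -(β w)) → (∀ w ∈ U, (βt w)ᵀ = -(βt w)) →
        (g z - ((Λ : ℂ))⁻¹ • gt z).PosSemidef →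
        ((Λ : ℂ) • gt z - g z).PosSemidef →
        ((∑ i : Fin n, ∑ k : Fin n, ∑ j : Fin n, ∑ l : Fin n,
            β z i k * (starRingEnd ℂ) (β z j l) * (g z)⁻¹ j i * (g z)⁻¹ l k).re ≤ Λ) →
        (∀ a b : Fin n,
          BoundedDerivs1 B (fun w => gt w a b) z ∧
          BoundedDerivs1 B (fun w => (gt w)⁻¹ a b) z ∧
          BoundedDerivs1 B (fun w => βt w a b) z) →
        (upsNormS g g gt g z).re ≤
          Λ ^ 2 * (upsNormS g (fun w => genMetric (g w) (β w))
              (fun w => genMetric (gt w) (βt w)) (fun w => genMetric (g w) (β w)) z).re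
            + K := by
  obtain ⟨K, hK⟩ := connection_difference_comparison_general n Λ B (by linarith)
  refine ⟨K, ?_⟩
  intro U hU g gt β βt z hz hg hgt hβ hβt hpos hpost _ _ hlower hupper hβnorm hB
  have hdiff {f : (Fin n → ℂ) → Matrix (Fin n) (Fin n) ℂ}
      (hf : ∀ a b, ContDiffOn ℝ 1 (fun w => f w a b) U) (a b : Fin n) :
      DifferentiableAt ℝ (fun w => f w a b) z :=
    ((hf a b).contDiffAt (hU.mem_nhds hz)).differentiableAt one_ne_zero
  have hcompare := hK g gt β βt z (hdiff hg) (hdiff hgt) (hdiff hβ) (hdiff hβt)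
    ((hU.eventually_mem hz).mono hpos) ((hU.eventually_mem hz).mono hpost) hlower hupper hβnorm
    fun a b => ⟨(hB a b).1.1, (hB a b).2.1.1, (hB a b).2.2.1, fun i => ((hB a b).2.2.2 i).2⟩
  refine hcompare.trans (add_le_add_left ?_ K)
  exact le_mul_of_one_le_left (upsNormS_genMetric_re_nonneg (hpos z hz) β _) (one_le_pow₀ hΛ)
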